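/- arXiv:quant-ph/0306161 — 6 statements merged into one kernel-verified Lean document; each statement's English description precedes it below -/
import Mathlib

section
/- For every m ≥ 1 and every density matrix ρ on (ℂ²)^{⊗m} (i.e. a positive semidefinite 2ᵐ×2ᵐ complex matrix of trace 1), the uniform average over all 2m-bit keys of the Pauli one-time-pad encryptions of ρ equals the maximally mixed state: (1/4ᵐ) Σ_{a,b ∈ {0,1}ᵐ} P_{a,b} ρ P_{a,b}† = (1/2ᵐ) I, where P_{a,b} = ⊗_{j=1}^{m} X^{a_j} Z^{b_j}, with X = [[0,1],[1,0]] and Z = [[1,0],[0,-1]] the single-qubit Pauli matrices and the tensor product taken as a Kronecker product. -/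
/-!
The Pauli operators are orthogonal in the sense that, on one qubit,
`∑_{a,b} (X^a Z^b)_{s t} * conj (X^a Z^b)_{u v} = 2 δ_{s u} δ_{t v}` (`sum_pauli_entries`).
Every entry of `pauliKey a b` is a product over the qubits, and the sum over keys of such a product
is the product of the single-qubit sums, so the same relation holds on `m` qubits with constant
`2 ^ m` (`sum_pauliKey_entries`). Hence the `(s, u)` entry of the sum of all encryptions of `ρ` is
`2 ^ m δ_{s u} tr ρ`, and `2 ^ m / 4 ^ m = 1 / 2 ^ m`.
-/

open Matrix BigOperators
open scoped ComplexOrder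

/-- The single-qubit Pauli X matrix. -/
def pauliX : Matrix (Fin 2) (Fin 2) ℂ := !![0, 1; 1, 0]

/-- The single-qubit Pauli Z matrix. -/
def pauliZ : Matrix (Fin 2) (Fin 2) ℂ := !![1, 0; 0, -1]

/-- The `m`-qubit Pauli operator `P_{a,b} = ⊗_j X^{a_j} Z^{b_j}`, realized entrywise as a
Kronecker product of the single-qubit operators, acting on `(ℂ²)^{⊗ m}` whose standard
basis is indexed by bit strings `Fin m → Fin 2`. -/
noncomputable def pauliKey {m : ℕ} (a b : Fin m → Fin 2) :
    Matrix (Fin m → Fin 2) (Fin m → Fin 2) ℂ :=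
  Matrix.of fun s t => ∏ j, ((pauliX ^ (a j : ℕ)) * (pauliZ ^ (b j : ℕ))) (s j) (t j)

/-- Orthogonality of the single-qubit operators `X^a Z^b`: the sum over `b` forces `t = v`, and
then the sum over `a` forces `s = u`. -/
lemma sum_pauli_entries (s t u v : Fin 2) :
    ∑ a : Fin 2, ∑ b : Fin 2, ((pauliX ^ (a : ℕ)) * (pauliZ ^ (b : ℕ))) s t *
      star (((pauliX ^ (a : ℕ)) * (pauliZ ^ (b : ℕ))) u v) =
      if s = u ∧ t = v then (2 : ℂ) else 0 := by
  fin_cases s <;> fin_cases t <;> fin_cases u <;> fin_cases v <;>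
    simp [pauliX, pauliZ, Fin.sum_univ_two] <;> norm_num

lemma sum_pauliKey_entries {m : ℕ} (s t u v : Fin m → Fin 2) :
    ∑ a : Fin m → Fin 2, ∑ b : Fin m → Fin 2,
      pauliKey a b s t * star (pauliKey a b u v) =
      if s = u ∧ t = v then (2 : ℂ) ^ m else 0 := by
  simp only [pauliKey, Matrix.of_apply, star_prod, ← Finset.prod_mul_distrib]
  -- Interchange the product over qubits with the sums over `b` and `a`.
  rw [Finset.sum_congr rfl fun a _ => (Fintype.prod_sum fun (j : Fin m) (b : Fin 2) =>
    ((pauliX ^ (a j : ℕ)) * (pauliZ ^ (b : ℕ))) (s j) (t j) *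
      star (((pauliX ^ (a j : ℕ)) * (pauliZ ^ (b : ℕ))) (u j) (v j))).symm]
  rw [← Fintype.prod_sum fun (j : Fin m) (a : Fin 2) => ∑ b : Fin 2,
    ((pauliX ^ (a : ℕ)) * (pauliZ ^ (b : ℕ))) (s j) (t j) *
      star (((pauliX ^ (a : ℕ)) * (pauliZ ^ (b : ℕ))) (u j) (v j))]
  simp only [sum_pauli_entries]
  rw [Finset.prod_ite_zero]
  simp [funext_iff, forall_and]

/-- The uniform average over all `2m`-bit keys of the Pauli one-time-pad encryptions of a
density matrix `ρ` on `m` qubits is the maximally mixed state. -/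
theorem stmt1 (m : ℕ) (hm : 1 ≤ m) (ρ : Matrix (Fin m → Fin 2) (Fin m → Fin 2) ℂ)
    (hρ : ρ.PosSemidef) (htr : ρ.trace = 1) :
    ((1 : ℂ) / 4 ^ m) • ∑ a : Fin m → Fin 2, ∑ b : Fin m → Fin 2,
        pauliKey a b * ρ * (pauliKey a b)ᴴ =
      ((1 : ℂ) / 2 ^ m) • (1 : Matrix (Fin m → Fin 2) (Fin m → Fin 2) ℂ) := by
  have key : ∑ a : Fin m → Fin 2, ∑ b : Fin m → Fin 2,
      pauliKey a b * ρ * (pauliKey a b)ᴴ =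
      ((2 : ℂ) ^ m) • (1 : Matrix (Fin m → Fin 2) (Fin m → Fin 2) ℂ) := by
    ext s u
    calc (∑ a : Fin m → Fin 2, ∑ b : Fin m → Fin 2,
          pauliKey a b * ρ * (pauliKey a b)ᴴ) s u
        = ∑ a : Fin m → Fin 2, ∑ b : Fin m → Fin 2, ∑ v, ∑ t,
            ρ t v * (pauliKey a b s t * star (pauliKey a b u v)) := by
          simp only [Matrix.sum_apply, Matrix.mul_apply, Matrix.conjTranspose_apply,
            Finset.sum_mul]
          refine Finset.sum_congr rfl fun a _ => Finset.sum_congr rfl fun b _ =>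
            Finset.sum_congr rfl fun v _ => Finset.sum_congr rfl fun t _ => ?_
          ring
      _ = ∑ v, ∑ t, ρ t v * ∑ a : Fin m → Fin 2, ∑ b : Fin m → Fin 2,
            pauliKey a b s t * star (pauliKey a b u v) := by
          simp only [Finset.mul_sum]
          rw [Finset.sum_congr rfl fun a _ => Finset.sum_comm, Finset.sum_comm]
          refine Finset.sum_congr rfl fun v _ => ?_
          rw [Finset.sum_congr rfl fun a _ => Finset.sum_comm, Finset.sum_comm]
      _ = (if s = u then (2 : ℂ) ^ m else 0) * ρ.trace := by
          simp only [sum_pauliKey_entries]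
          by_cases h : s = u
          · simp [h, Matrix.trace, Finset.mul_sum, mul_comm]
          · simp [h]
      _ = _ := by simp [htr, Matrix.one_apply]
  rw [key, smul_smul]
  congr 1
  rw [show (4 : ℂ) = 2 * 2 by norm_num, mul_pow]
  field_simp
end

section
/- Let d ≥ 1, let K be a finite index set, let (p_k)_{k ∈ K} be a probability distribution (p_k ≥ 0, Σ_k p_k = 1), and let (U_k)_{k ∈ K} be unitary d×d complex matrices such that Σ_k p_k U_k ρ U_k† = (1/d) I for every density matrix ρ on ℂᵈ. Then the number of indices k with p_k > 0 is at least d². In particular, perfectly encrypting m qubits (d = 2ᵐ) by random unitaries requires at least 4ᵐ distinct unitaries, i.e. a classical key of at least 2m bits. -/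
open Matrix BigOperators
open scoped ComplexOrder

/-!
The encryption condition extends by linearity from density matrices to all matrices: it holds for
`X * Xᴴ` after rescaling, and by polarization the matrices `X * Xᴴ` span everything
(`linearMap_eq_zero_of_density`). So `∑ p k • (U k * X * (U k)ᴴ) = (tr X / d) • 1` for every `X`.
Read entrywise on the matrix units `X = E_ab`, this is
`d * ∑ k, p k * U k i a * conj (U k j b) = δ_ab δ_ij`, i.e. the identity of size `d²` is a product
of a `d² × S` and an `S × d²` matrix, where `S` is the set of keys of positive probability.
Comparing ranks gives `d² ≤ |S|`.
-/

/-- A linear map on matrices that vanishes on all density matrices is zero. -/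
lemma linearMap_eq_zero_of_density {n : Type*} [Fintype n] [DecidableEq n]
    {M : Type*} [AddCommGroup M] [Module ℂ M] (L : Matrix n n ℂ →ₗ[ℂ] M)
    (hL : ∀ ρ : Matrix n n ℂ, ρ.PosSemidef → ρ.trace = 1 → L ρ = 0) (X : Matrix n n ℂ) :
    L X = 0 := by
  have hsq : ∀ Y : Matrix n n ℂ, L (Y * Yᴴ) = 0 := by
    intro Y
    have hpos := Matrix.posSemidef_self_mul_conjTranspose Y
    by_cases ht : (Y * Yᴴ).trace = 0
    · rw [hpos.trace_eq_zero_iff.1 ht, map_zero]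
    · have h := hL ((Y * Yᴴ).trace⁻¹ • (Y * Yᴴ))
        (hpos.smul (inv_nonneg.2 hpos.trace_nonneg))
        (by rw [trace_smul, smul_eq_mul, inv_mul_cancel₀ ht])
      rw [map_smul] at h
      exact (smul_eq_zero.1 h).resolve_left (inv_ne_zero ht)
  -- Polarization of `Y ↦ Y * Yᴴ` between `X` and `1`: the matrices `X + 1` and `X + i • 1` suffice.
  have h0 := hsq X
  have h1 := hsq 1
  have h2 := hsq (X + 1)
  have h3 := hsq (X + Complex.I • 1)
  simp only [conjTranspose_add, conjTranspose_smul, conjTranspose_one, mul_add, add_mul, mul_one,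
    one_mul, mul_smul_comm, smul_mul_assoc, map_add, map_smul, h0, zero_add] at h1 h2 h3
  simp only [h1, smul_zero, add_zero, Complex.star_def, Complex.conj_I, neg_smul] at h2 h3
  have h4 : Complex.I • (L Xᴴ - L X) = 0 := by
    rw [smul_sub, ← h3]; abel
  have h5 : L Xᴴ = L X := sub_eq_zero.1 ((smul_eq_zero.1 h4).resolve_left Complex.I_ne_zero)
  rw [h5, ← two_smul ℂ] at h2
  exact (smul_eq_zero.1 h2).resolve_left two_ne_zero

/-- Perfectly encrypting a `d`-dimensional quantum system by applying unitaries `U k` with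
probabilities `p k` (so that every density matrix is mapped to the maximally mixed state)
requires at least `d²` unitaries used with positive probability. -/
theorem stmt2 (d : ℕ) (hd : 1 ≤ d) (K : Type) [Fintype K]
    (p : K → ℝ) (hp : ∀ k, 0 ≤ p k) (hpsum : ∑ k, p k = 1)
    (U : K → Matrix (Fin d) (Fin d) ℂ)
    (hU : ∀ k, U k ∈ Matrix.unitaryGroup (Fin d) ℂ)
    (henc : ∀ ρ : Matrix (Fin d) (Fin d) ℂ, ρ.PosSemidef → ρ.trace = 1 →
      ∑ k, (p k : ℂ) • (U k * ρ * (U k)ᴴ) =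
        ((d : ℂ))⁻¹ • (1 : Matrix (Fin d) (Fin d) ℂ)) :
    d ^ 2 ≤ (Finset.univ.filter fun k => 0 < p k).card := by
  have hd0 : (d : ℂ) ≠ 0 := by exact_mod_cast (by omega : d ≠ 0)
  let L : Matrix (Fin d) (Fin d) ℂ →ₗ[ℂ] Matrix (Fin d) (Fin d) ℂ :=
    { toFun := fun X => ∑ k, (p k : ℂ) • (U k * X * (U k)ᴴ) - (X.trace * (d : ℂ)⁻¹) • 1
      map_add' := by
        intro X Y
        simp only [mul_add, add_mul, smul_add, Finset.sum_add_distrib, trace_add, add_smul]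
        abel
      map_smul' := by
        intro c X
        simp only [mul_smul_comm, smul_mul_assoc, trace_smul, smul_eq_mul, RingHom.id_apply,
          smul_sub, Finset.smul_sum, smul_smul, mul_assoc, mul_comm c] }
  have hall : ∀ X : Matrix (Fin d) (Fin d) ℂ,
      ∑ k, (p k : ℂ) • (U k * X * (U k)ᴴ) = (X.trace * (d : ℂ)⁻¹) • 1 := fun X =>
    sub_eq_zero.1 <| linearMap_eq_zero_of_density L (fun ρ h1 h2 => by
      change _ - (ρ.trace * (d : ℂ)⁻¹) • (1 : Matrix (Fin d) (Fin d) ℂ) = 0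
      rw [henc ρ h1 h2, h2, one_mul, sub_self]) X
  set S := Finset.univ.filter fun k => 0 < p k with hS
  let A : Matrix (Fin d × Fin d) S ℂ := Matrix.of fun x k => U k x.1 x.2
  let B : Matrix S (Fin d × Fin d) ℂ := Matrix.of fun k y => d * p k * star (U k y.1 y.2)
  have hAB : A * B = 1 := by
    ext ⟨i, a⟩ ⟨j, b⟩
    have h := congrFun (congrFun (hall (Matrix.single a b 1)) i) j
    have hentry : ∀ k, (U k * Matrix.single a b (1 : ℂ) * (U k)ᴴ : Matrix (Fin d) (Fin d) ℂ) i j =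
        U k i a * star (U k j b) := by
      intro k
      simp [Matrix.mul_apply, Matrix.single_apply, ite_and]
    simp only [Matrix.sum_apply, Matrix.smul_apply, hentry, smul_eq_mul] at h
    calc (A * B) (i, a) (j, b)
        = ∑ k ∈ S, d * (p k * (U k i a * star (U k j b))) := by
          rw [Matrix.mul_apply, ← Finset.sum_coe_sort S]
          exact Finset.sum_congr rfl fun k _ => by simp only [A, B, Matrix.of_apply]; ring
      _ = d * ∑ k, p k * (U k i a * star (U k j b)) := by
          rw [Finset.mul_sum]
          refine Finset.sum_subset (Finset.subset_univ _) fun k _ hk => ?_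
          have : p k = 0 := le_antisymm (by simpa [hS] using hk) (hp k)
          simp [this]
      _ = (1 : Matrix (Fin d × Fin d) (Fin d × Fin d) ℂ) (i, a) (j, b) := by
          rw [h]
          by_cases hab : a = b <;> by_cases hij : i = j <;>
            simp [hab, hij, Matrix.one_apply, hd0]
  have hrank := (Matrix.rank_mul_le_left A B).trans A.rank_le_card_width
  rw [hAB, Matrix.rank_one] at hrank
  simpa [pow_two] using hrank
end

section
/- Fix n ≥ 1 and set d = 2ⁿ. Identify ℂᵈ with functions {0,1}ⁿ → ℂ and let |Ψₙ⟩ = 2^{-n/2} Σ_{s ∈ {0,1}ⁿ} (-1)^{w(s)} |s⟩ ⊗ |s̄⟩ ∈ ℂᵈ ⊗ ℂᵈ, where s̄ is the bitwise complement of s and w(s) is the Hamming weight of s (this is the n-fold tensor product of singlets (|01⟩−|10⟩)/√2, with Alice holding the first factor). For a key k ∈ {0,1}ⁿ let X^k = ⊗_{j=1}^{n} X^{k_j} act on Alice's factor ℂᵈ, where X = [[0,1],[1,0]]. Then the state ρ = 2^{-n} Σ_{k ∈ {0,1}ⁿ} (X^k ⊗ I) |Ψₙ⟩⟨Ψₙ|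 (X^k ⊗ I) is separable across the cut between the two ℂᵈ factors. -/
/-!
Everything in sight factorises over the `n` qubit pairs. For a single pair, flipping Alice's half
of the singlet with probability `1/2` gives
`(|Ψ⁻⟩⟨Ψ⁻| + |Φ⁻⟩⟨Φ⁻|) / 2 = (|+ -⟩⟨+ -| + |- +⟩⟨- +|) / 2`,
an equal mixture of two product states in the Hadamard basis (`one_pair_identity`).
Writing each entry of the `n`-pair state as a sum over keys of a product over qubits and exchanging
sum and product, the one-pair identity yields
`ρ = 2⁻ⁿ ∑_u |h_u⟩⟨h_u| ⊗ |h_ū⟩⟨h_ū|`, where `h_u` runs through the `n`-qubit Hadamard basis and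
`ū` is the complement of `u`. This is an explicit separable decomposition.
-/


open Matrix Kronecker BigOperators
open scoped ComplexOrder

/-- A density matrix on a bipartite system `ℂ^α ⊗ ℂ^β` (matrices indexed by pairs) is
separable if it is a finite convex combination of Kronecker products of density matrices. -/
def Separable {α β : Type} [Fintype α] [Fintype β] [DecidableEq α] [DecidableEq β]
    (ρ : Matrix (α × β) (α × β) ℂ) : Prop :=
  ∃ (N : ℕ) (q : Fin N → ℝ) (A : Fin N → Matrix α α ℂ) (B : Fin N → Matrix β β ℂ),
    (∀ j, 0 ≤ q j) ∧ (∑ j, q j) = 1 ∧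
    (∀ j, (A j).PosSemidef) ∧ (∀ j, (A j).trace = 1) ∧
    (∀ j, (B j).PosSemidef) ∧ (∀ j, (B j).trace = 1) ∧
    ρ = ∑ j, (q j : ℂ) • (A j ⊗ₖ B j)

/-- The `n`-fold tensor product of singlets `(|01⟩ - |10⟩)/√2`:
`|Ψₙ⟩ = 2^{-n/2} ∑_{s} (-1)^{w(s)} |s⟩ ⊗ |s̄⟩`, where `s̄` is the bitwise complement
and `w(s)` the Hamming weight. -/
noncomputable def singletsVec (n : ℕ) : (Fin n → Fin 2) × (Fin n → Fin 2) → ℂ :=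
  fun p =>
    if p.2 = (fun j => if p.1 j = 0 then 1 else 0) then
      (-1 : ℂ) ^ (∑ j, (p.1 j : ℕ)) / (Real.sqrt 2 : ℂ) ^ n
    else 0

/-- The bit-flip operator `X^k ⊗ I` on Alice's factor, conditional on the key `k`:
a permutation matrix sending `|s⟩ ⊗ |t⟩` to `|s ⊕ k⟩ ⊗ |t⟩`. -/
def bitFlipKey {n : ℕ} (k : Fin n → Fin 2) :
    Matrix ((Fin n → Fin 2) × (Fin n → Fin 2)) ((Fin n → Fin 2) × (Fin n → Fin 2)) ℂ :=
  Matrix.of fun p q =>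
    if p.1 = (fun j => k j + q.1 j) ∧ p.2 = q.2 then 1 else 0

/-- Separability may be witnessed by a convex combination indexed by any finite type. -/
lemma separable_of_fintype {ι α β : Type} [Fintype ι] [Fintype α] [Fintype β] [DecidableEq α]
    [DecidableEq β] {ρ : Matrix (α × β) (α × β) ℂ} (q : ι → ℝ) (A : ι → Matrix α α ℂ)
    (B : ι → Matrix β β ℂ) (hq : ∀ j, 0 ≤ q j) (hq1 : ∑ j, q j = 1)
    (hA : ∀ j, (A j).PosSemidef) (hA1 : ∀ j, (A j).trace = 1)
    (hB : ∀ j, (B j).PosSemidef) (hB1 : ∀ j, (B j).trace = 1)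
    (hρ : ρ = ∑ j, (q j : ℂ) • (A j ⊗ₖ B j)) : Separable ρ := by
  let e := (Fintype.equivFin ι).symm
  refine ⟨Fintype.card ι, q ∘ e, A ∘ e, B ∘ e, fun j => hq _, ?_, fun j => hA _, fun j => hA1 _,
    fun j => hB _, fun j => hB1 _, ?_⟩
  · rw [← hq1]
    exact e.sum_comp q
  · rw [hρ]
    exact (e.sum_comp fun j => (q j : ℂ) • (A j ⊗ₖ B j)).symm

/-- The amplitude `⟨x y|Ψ⁻⟩` of the singlet `(|01⟩ - |10⟩)/√2`. -/
noncomputable def singletAmp (x y : Fin 2) : ℂ :=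
  if y = (if x = 0 then 1 else 0) then (-1 : ℂ) ^ (x : ℕ) / (Real.sqrt 2 : ℂ) else 0

/-- The entry `⟨y|H|x⟩` of the Hadamard matrix: `hadAmp 0` is `|+⟩` and `hadAmp 1` is `|-⟩`. -/
noncomputable def hadAmp (x y : Fin 2) : ℂ :=
  (-1 : ℂ) ^ ((x : ℕ) * (y : ℕ)) / (Real.sqrt 2 : ℂ)

/-- The vector `h_u` of the `n`-qubit Hadamard basis. -/
noncomputable def hadVec {n : ℕ} (u : Fin n → Fin 2) : (Fin n → Fin 2) → ℂ :=
  fun a => ∏ j, hadAmp (u j) (a j)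

lemma inv_sqrt_two_mul_self : (Real.sqrt 2 : ℂ)⁻¹ * (Real.sqrt 2 : ℂ)⁻¹ = 1 / 2 := by
  rw [← mul_inv, ← Complex.ofReal_mul, Real.mul_self_sqrt (by norm_num)]
  norm_num

lemma star_hadAmp (x y : Fin 2) : star (hadAmp x y) = hadAmp x y := by
  simp [hadAmp]

lemma star_singletAmp (x y : Fin 2) : star (singletAmp x y) = singletAmp x y := by
  unfold singletAmp
  split_ifs <;> simp

lemma hadAmp_norm (x : Fin 2) : ∑ y, hadAmp x y * hadAmp x y = 1 := by
  have h := inv_sqrt_two_mul_self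
  simp only [hadAmp, div_eq_mul_inv]
  generalize (Real.sqrt 2 : ℂ)⁻¹ = c at h ⊢
  fin_cases x <;> simp [Fin.sum_univ_two] <;> grind

/-- Entrywise form of
`(|Ψ⁻⟩⟨Ψ⁻| + |Φ⁻⟩⟨Φ⁻|) / 2 = (|+ -⟩⟨+ -| + |- +⟩⟨- +|) / 2`. The common factor `1/2` is dropped. -/
lemma one_pair_identity (x y x' y' : Fin 2) :
    ∑ k, singletAmp (k + x) y * singletAmp (k + x') y' =
      ∑ u, (hadAmp u x * hadAmp u x') * (hadAmp (1 + u) y * hadAmp (1 + u) y') := by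
  have h := inv_sqrt_two_mul_self
  simp only [singletAmp, hadAmp, div_eq_mul_inv]
  generalize (Real.sqrt 2 : ℂ)⁻¹ = c at h ⊢
  fin_cases x <;> fin_cases y <;> fin_cases x' <;> fin_cases y' <;>
    simp [Fin.sum_univ_two] <;> grind

lemma singletsVec_eq_prod (n : ℕ) (a b : Fin n → Fin 2) :
    singletsVec n (a, b) = ∏ j, singletAmp (a j) (b j) := by
  simp only [singletsVec, singletAmp, Finset.prod_ite_zero, funext_iff, Finset.mem_univ,
    true_imp_iff, Finset.prod_div_distrib, Finset.prod_pow_eq_pow_sum, Finset.prod_const,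
    Finset.card_univ, Fintype.card_fin]

/-- Exchange of a product over qubits with a sum over keys. -/
lemma sum_prod_key {n : ℕ} (f : Fin n → Fin 2 → ℂ) :
    ∑ k : Fin n → Fin 2, ∏ j, f j (k j) = ∏ j, ∑ x, f j x :=
  (Fintype.prod_sum f).symm

lemma hadVec_trace {n : ℕ} (u : Fin n → Fin 2) :
    (Matrix.vecMulVec (hadVec u) (star (hadVec u))).trace = 1 := by
  simp only [Matrix.trace, Matrix.diag, Matrix.vecMulVec_apply, Pi.star_apply, hadVec, star_prod,
    star_hadAmp, ← Finset.prod_mul_distrib]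
  rw [sum_prod_key fun j x => hadAmp (u j) x * hadAmp (u j) x]
  exact Finset.prod_eq_one fun j _ => hadAmp_norm (u j)

/-- Addition of bit strings is its own inverse, so `k` moves to the other side unchanged. -/
lemma eq_key_add_iff {n : ℕ} (k a b : Fin n → Fin 2) :
    a = (fun j => k j + b j) ↔ b = (fun j => k j + a j) := by
  simp only [funext_iff]
  refine forall_congr' fun j => ?_
  generalize k j = x
  generalize a j = y
  generalize b j = z
  revert x y z
  decide

lemma bitFlipKey_mulVec {n : ℕ} (k a b : Fin n → Fin 2)
    (v : (Fin n → Fin 2) × (Fin n → Fin 2) → ℂ) :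
    (bitFlipKey k *ᵥ v) (a, b) = v (fun j => k j + a j, b) := by
  simp only [Matrix.mulVec, dotProduct, bitFlipKey, Matrix.of_apply, eq_key_add_iff k a]
  rw [Finset.sum_eq_single (fun j => k j + a j, b)]
  · simp
  · rintro ⟨c, d⟩ - h
    rw [if_neg, zero_mul]
    rintro ⟨rfl, rfl⟩
    exact h rfl
  · simp

lemma vecMul_bitFlipKey {n : ℕ} (k a b : Fin n → Fin 2)
    (v : (Fin n → Fin 2) × (Fin n → Fin 2) → ℂ) :
    (v ᵥ* bitFlipKey k) (a, b) = v (fun j => k j + a j, b) := by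
  simp only [Matrix.vecMul, dotProduct, bitFlipKey, Matrix.of_apply]
  rw [Finset.sum_eq_single (fun j => k j + a j, b)]
  · simp
  · rintro ⟨c, d⟩ - h
    rw [if_neg, mul_zero]
    rintro ⟨rfl, rfl⟩
    exact h rfl
  · simp

/-- Applying a uniformly random `n`-bit key of conditional bit flips to Alice's halves of
`n` singlets yields a separable state across the Alice–Claire cut. -/
theorem stmt3 (n : ℕ) (hn : 1 ≤ n) :
    Separable (((1 : ℂ) / 2 ^ n) • ∑ k : Fin n → Fin 2,
      bitFlipKey k * Matrix.vecMulVec (singletsVec n) (star (singletsVec n)) *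
        bitFlipKey k) := by
  refine separable_of_fintype (ι := Fin n → Fin 2) (fun _ => 1 / 2 ^ n)
    (fun u => Matrix.vecMulVec (hadVec u) (star (hadVec u)))
    (fun u => Matrix.vecMulVec (hadVec fun j => 1 + u j) (star (hadVec fun j => 1 + u j)))
    (fun _ => by positivity) (by simp)
    (fun _ => Matrix.posSemidef_vecMulVec_self_star _) (fun _ => hadVec_trace _)
    (fun _ => Matrix.posSemidef_vecMulVec_self_star _) (fun _ => hadVec_trace _) ?_
  push_cast
  rw [← Finset.smul_sum]
  congr 1
  ext ⟨a, b⟩ ⟨a', b'⟩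
  simp only [Matrix.sum_apply, Matrix.mul_vecMulVec, Matrix.vecMulVec_mul, Matrix.vecMulVec_apply,
    bitFlipKey_mulVec, vecMul_bitFlipKey, Matrix.kroneckerMap_apply, Pi.star_apply,
    singletsVec_eq_prod, hadVec, star_prod, star_hadAmp, star_singletAmp,
    ← Finset.prod_mul_distrib]
  rw [sum_prod_key fun j k => singletAmp (k + a j) (b j) * singletAmp (k + a' j) (b' j),
    sum_prod_key fun j u => (hadAmp u (a j) * hadAmp u (a' j)) *
      (hadAmp (1 + u) (b j) * hadAmp (1 + u) (b' j))]
  exact Finset.prod_congr rfl fun j _ => one_pair_identity _ _ _ _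
end

section
/- In ℂ² ⊗ ℂ², let ψ₋ = (|01⟩ − |10⟩)/√2 and φ₋ = (|00⟩ − |11⟩)/√2. For p ∈ [0,1], the density matrix ρ_p = p |ψ₋⟩⟨ψ₋| + (1−p) |φ₋⟩⟨φ₋| is separable if and only if p = 1/2. -/
/-!
Separability forces the partial transpose to be positive semidefinite
(`Separable.posSemidef_partialTranspose`), because transposing the second factor of each
`A j ⊗ₖ B j` keeps it positive semidefinite. For `ρ_p` the partial transpose has quadratic form
`1 - 2p` at `|00⟩ + |11⟩` and `2p - 1` at `|01⟩ + |10⟩`; both are nonnegative only for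
`p = 1/2`.

Conversely, with `X` the bit flip, `ρ_{1/2} = (I ⊗ I - X ⊗ X) / 4`, and this is the equal mixture
of `|+⟩⟨+| ⊗ |-⟩⟨-|` and `|-⟩⟨-| ⊗ |+⟩⟨+|`.
-/


open Matrix Kronecker BigOperators
open scoped ComplexOrder

/-- The singlet `ψ₋ = (|01⟩ - |10⟩)/√2` in `ℂ² ⊗ ℂ²`. -/
noncomputable def psiMinus : Fin 2 × Fin 2 → ℂ :=
  fun p => (if p = (0, 1) then 1 else if p = (1, 0) then -1 else 0) / (Real.sqrt 2 : ℂ)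

/-- The Bell state `φ₋ = (|00⟩ - |11⟩)/√2` in `ℂ² ⊗ ℂ²`. -/
noncomputable def phiMinus : Fin 2 × Fin 2 → ℂ :=
  fun p => (if p = (0, 0) then 1 else if p = (1, 1) then -1 else 0) / (Real.sqrt 2 : ℂ)

/-- The partial transpose of a bipartite matrix, with respect to the second factor. -/
def partialTranspose {α β : Type} (ρ : Matrix (α × β) (α × β) ℂ) : Matrix (α × β) (α × β) ℂ :=
  Matrix.of fun x y => ρ (x.1, y.2) (y.1, x.2)

/-- The Peres criterion: a separable matrix has positive semidefinite partial transpose. -/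
lemma Separable.posSemidef_partialTranspose {α β : Type} [Fintype α] [Fintype β] [DecidableEq α]
    [DecidableEq β] {ρ : Matrix (α × β) (α × β) ℂ} (h : Separable ρ) :
    (partialTranspose ρ).PosSemidef := by
  obtain ⟨N, q, A, B, hq, -, hA, -, hB, -, rfl⟩ := h
  have key : partialTranspose (∑ j, (q j : ℂ) • (A j ⊗ₖ B j)) =
      ∑ j, (q j : ℂ) • (A j ⊗ₖ (B j)ᵀ) := by
    ext x y
    simp [partialTranspose, Matrix.sum_apply]
  rw [key]
  refine Matrix.posSemidef_sum _ fun j _ => ?_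
  exact ((hA j).kronecker (hB j).transpose).smul (by exact_mod_cast hq j)

/-- The projection `|+⟩⟨+|` for `s = 1`, and `|-⟩⟨-|` for `s = -1`. -/
noncomputable def signProj (s : ℝ) : Matrix (Fin 2) (Fin 2) ℂ :=
  !![1 / 2, (s : ℂ) / 2; (s : ℂ) / 2, 1 / 2]

lemma signProj_posSemidef {s : ℝ} (hs : s * s = 1) : (signProj s).PosSemidef := by
  have hs' : (s : ℂ) * s = 1 := by exact_mod_cast hs
  have h : signProj s = (signProj s)ᴴ * signProj s := by
    ext i j
    fin_cases i <;> fin_cases j <;> simp [signProj, Matrix.mul_apply, Fin.sum_univ_two, map_ofNat] <;>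
      first | ring1 | linear_combination (-1 / 4 : ℂ) * hs'
  rw [h]
  exact Matrix.posSemidef_conjTranspose_mul_self _

lemma signProj_trace (s : ℝ) : (signProj s).trace = 1 := by
  simp [signProj, Matrix.trace_fin_two]
  norm_num

/-- The mixture `p |ψ₋⟩⟨ψ₋| + (1-p) |φ₋⟩⟨φ₋|` is separable if and only if `p = 1/2`. -/
theorem stmt5 (p : ℝ) (hp0 : 0 ≤ p) (hp1 : p ≤ 1) :
    Separable ((p : ℂ) • Matrix.vecMulVec psiMinus (star psiMinus) +
        ((1 - p : ℝ) : ℂ) • Matrix.vecMulVec phiMinus (star phiMinus)) ↔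
      p = 1 / 2 := by
  have h2 : ((Real.sqrt 2 : ℝ) : ℂ)⁻¹ * ((Real.sqrt 2 : ℝ) : ℂ)⁻¹ = 1 / 2 := by
    rw [← mul_inv, ← Complex.ofReal_mul, Real.mul_self_sqrt (by norm_num)]
    norm_num
  constructor
  · intro h
    have hP := h.posSemidef_partialTranspose
    -- Test against `|00⟩ + |11⟩` and `|01⟩ + |10⟩`.
    have h1 := hP.dotProduct_mulVec_nonneg (fun x => if x.1 = x.2 then 1 else 0)
    have h3 := hP.dotProduct_mulVec_nonneg (fun x => if x.1 = x.2 then 0 else 1)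
    simp [partialTranspose, dotProduct, mulVec, Fintype.sum_prod_type, Fin.sum_univ_two,
      vecMulVec_apply, psiMinus, phiMinus, div_eq_mul_inv, h2] at h1 h3
    have h1' : (0 : ℂ) ≤ ((1 - 2 * p : ℝ) : ℂ) := by
      convert h1 using 1
      push_cast
      ring
    have h3' : (0 : ℂ) ≤ ((2 * p - 1 : ℝ) : ℂ) := by
      convert h3 using 1
      push_cast
      ring
    rw [Complex.zero_le_real] at h1' h3'
    linarith
  · rintro rfl
    refine ⟨2, fun _ => 1 / 2, ![signProj 1, signProj (-1)], ![signProj (-1), signProj 1],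
      fun _ => by norm_num, by norm_num, ?_, ?_, ?_, ?_, ?_⟩
    · intro j; fin_cases j <;> exact signProj_posSemidef (by norm_num)
    · intro j; fin_cases j <;> exact signProj_trace _
    · intro j; fin_cases j <;> exact signProj_posSemidef (by norm_num)
    · intro j; fin_cases j <;> exact signProj_trace _
    · ext ⟨a, b⟩ ⟨c, d⟩
      fin_cases a <;> fin_cases b <;> fin_cases c <;> fin_cases d <;>
        simp [signProj, vecMulVec_apply, psiMinus, phiMinus, div_eq_mul_inv, h2] <;> norm_num
end

section
/- Let d ≥ 2, let |Ψ⟩ = (1/√d) Σᵢ eᵢ ⊗ eᵢ ∈ ℂᵈ ⊗ ℂᵈ be the normalized maximally entangled state, let I be a finite index set, let (p_i)_{i ∈ I} be a probability distribution, and let (U_i)_{i ∈ I} be unitary d×d complex matrices. If the density matrix Σ_i p_i (U_i ⊗ I) |Ψ⟩⟨Ψ| (U_i† ⊗ I) is separable, then the Shannon entropy H(p) = Σ_i (−p_i log p_i)/log 2 satisfies H(p) ≥ log₂ d. In particular, protecting n = log₂ d qubit-pairs of maximal entanglement by random local unitaries requires at least n bits of key randomness. -/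
/-!
Write `ψ i = (U i ⊗ 1) Ψ`, so that the state is `ρ = ∑ i, p i • |ψ i⟩⟨ψ i|`. The proof compares the
overlap `⟨ψ k, ρ ψ k⟩` with two bounds.

* All terms of `ρ` are positive semidefinite and `ψ k` is a unit vector, so `p k ≤ ⟨ψ k, ρ ψ k⟩`.
* A product state satisfies `⟨ψ k, (A ⊗ B) ψ k⟩ = tr ((U k)ᴴ A (U k) Bᵀ) / d ≤ 1 / d`, because
  `tr (X Y) ≤ tr X * tr Y` for positive semidefinite `X`, `Y` (submultiplicativity of the Frobenius
  norm). By convexity the same bound holds for every separable state.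

Hence `p k ≤ 1 / d` for every `k`: the distribution has min-entropy at least `log₂ d`, and the
Shannon entropy is at least the min-entropy.
-/

open Matrix Kronecker BigOperators
open scoped ComplexOrder

/-- The normalized maximally entangled state `|Ψ⟩ = (1/√d) ∑ i, eᵢ ⊗ eᵢ` on `ℂᵈ ⊗ ℂᵈ`. -/
noncomputable def maxEntangledN (d : ℕ) : Fin d × Fin d → ℂ :=
  fun p => if p.1 = p.2 then 1 / (Real.sqrt d : ℂ) else 0

section Factorization

open scoped MatrixOrder

lemma exists_eq_conjTranspose_mul_self {n : Type} [Fintype n] [DecidableEq n]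
    {X : Matrix n n ℂ} (hX : X.PosSemidef) : ∃ D : Matrix n n ℂ, X = Dᴴ * D :=
  CStarAlgebra.nonneg_iff_eq_star_mul_self.mp hX.nonneg

end Factorization

section Frobenius

open scoped Matrix.Norms.Frobenius

/-- The squared Frobenius norm is the trace of the Gram matrix. -/
lemma re_trace_conjTranspose_mul_self {n : Type} [Fintype n] (X : Matrix n n ℂ) :
    (Xᴴ * X).trace.re = ‖X‖ ^ 2 := by
  rw [Matrix.frobenius_norm_def, ← Real.sqrt_eq_rpow, Real.sq_sqrt (by positivity),
    Finset.sum_comm]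
  simp only [Matrix.trace, Matrix.diag, Matrix.mul_apply, Matrix.conjTranspose_apply,
    Complex.re_sum]
  refine Finset.sum_congr rfl fun i _ => Finset.sum_congr rfl fun j _ => ?_
  rw [Real.rpow_two, ← Complex.normSq_eq_norm_sq, Complex.normSq_apply]
  simp

/-- With `X = Dᴴ D` and `Y = Cᴴ C`, the claim is `‖D Cᴴ‖² ≤ ‖D‖² ‖C‖²` in the Frobenius norm. -/
lemma re_trace_mul_le {n : Type} [Fintype n] [DecidableEq n] {X Y : Matrix n n ℂ}
    (hX : X.PosSemidef) (hY : Y.PosSemidef) :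
    (X * Y).trace.re ≤ X.trace.re * Y.trace.re := by
  obtain ⟨D, rfl⟩ := exists_eq_conjTranspose_mul_self hX
  obtain ⟨C, rfl⟩ := exists_eq_conjTranspose_mul_self hY
  have h : (Dᴴ * D * (Cᴴ * C)).trace = ((D * Cᴴ)ᴴ * (D * Cᴴ)).trace := by
    rw [Matrix.conjTranspose_mul, Matrix.conjTranspose_conjTranspose, ← Matrix.mul_assoc,
      Matrix.trace_mul_comm]
    simp only [Matrix.mul_assoc]
  rw [h, re_trace_conjTranspose_mul_self, re_trace_conjTranspose_mul_self,
    re_trace_conjTranspose_mul_self, ← mul_pow]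
  refine pow_le_pow_left₀ (norm_nonneg _) ?_ 2
  have := Matrix.frobenius_norm_mul D Cᴴ
  rwa [Matrix.frobenius_norm_conjTranspose] at this

end Frobenius

/-- The vector `(V ⊗ 1) Ψ`. -/
noncomputable def rotatedState {d : ℕ} (V : Matrix (Fin d) (Fin d) ℂ) : Fin d × Fin d → ℂ :=
  (V ⊗ₖ (1 : Matrix (Fin d) (Fin d) ℂ)) *ᵥ maxEntangledN d

lemma rotatedState_apply {d : ℕ} (V : Matrix (Fin d) (Fin d) ℂ) (x : Fin d × Fin d) :
    rotatedState V x = V x.1 x.2 * (1 / (Real.sqrt d : ℂ)) := by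
  simp only [rotatedState, Matrix.mulVec, dotProduct, Fintype.sum_prod_type,
    Matrix.kroneckerMap_apply, maxEntangledN, Matrix.one_apply]
  simp

lemma conj_vecMulVec_maxEntangledN {d : ℕ} (V : Matrix (Fin d) (Fin d) ℂ) :
    (V ⊗ₖ (1 : Matrix (Fin d) (Fin d) ℂ)) *
        Matrix.vecMulVec (maxEntangledN d) (star (maxEntangledN d)) *
          (Vᴴ ⊗ₖ (1 : Matrix (Fin d) (Fin d) ℂ)) =
      Matrix.vecMulVec (rotatedState V) (star (rotatedState V)) := by
  rw [Matrix.mul_vecMulVec, Matrix.vecMulVec_mul, rotatedState, Matrix.star_mulVec,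
    Matrix.conjTranspose_kronecker, Matrix.conjTranspose_one]

/-- The overlap with a product operator, as a trace on a single factor. -/
lemma rotatedState_kronecker {d : ℕ} (V A B : Matrix (Fin d) (Fin d) ℂ) :
    star (rotatedState V) ⬝ᵥ ((A ⊗ₖ B) *ᵥ rotatedState V) =
      (Vᴴ * A * V * Bᵀ).trace * (1 / (d : ℂ)) := by
  have hs : (1 / (Real.sqrt d : ℂ)) * (1 / (Real.sqrt d : ℂ)) = 1 / (d : ℂ) := by
    rw [div_mul_div_comm, one_mul, ← Complex.ofReal_mul, Real.mul_self_sqrt (Nat.cast_nonneg d),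
      Complex.ofReal_natCast]
  have hs' : star (1 / (Real.sqrt d : ℂ)) = 1 / (Real.sqrt d : ℂ) := by
    simp
  simp only [dotProduct, Matrix.mulVec, Pi.star_apply, rotatedState_apply, star_mul', hs',
    Fintype.sum_prod_type, Matrix.kroneckerMap_apply, Matrix.trace, Matrix.diag,
    Matrix.mul_apply, Matrix.conjTranspose_apply, Matrix.transpose_apply, ← hs,
    Finset.sum_mul, Finset.mul_sum]
  -- The left side sums over `(a, b, a', b')`, the right side over `(b, b', a', a)`.
  refine Finset.sum_comm.trans (Finset.sum_congr rfl fun b _ => ?_)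
  refine (Finset.sum_comm.trans (Finset.sum_congr rfl fun a' _ => Finset.sum_comm)).trans
    (Finset.sum_comm.trans ?_)
  refine Finset.sum_congr rfl fun b' _ => Finset.sum_congr rfl fun a' _ =>
    Finset.sum_congr rfl fun a _ => ?_
  ring

/-- A product state has overlap at most `1 / d` with a maximally entangled state. -/
lemma re_rotatedState_kronecker_le {d : ℕ} {V A B : Matrix (Fin d) (Fin d) ℂ}
    (hV : V ∈ Matrix.unitaryGroup (Fin d) ℂ) (hA : A.PosSemidef) (hAt : A.trace = 1)
    (hB : B.PosSemidef) (hBt : B.trace = 1) :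
    (star (rotatedState V) ⬝ᵥ ((A ⊗ₖ B) *ᵥ rotatedState V)).re ≤ 1 / d := by
  have ht : (Vᴴ * A * V).trace = 1 := by
    rw [Matrix.trace_mul_comm, ← Matrix.mul_assoc, ← Matrix.star_eq_conjTranspose,
      Matrix.mem_unitaryGroup_iff.mp hV, Matrix.one_mul, hAt]
  have h := re_trace_mul_le (hA.conjTranspose_mul_mul_same V) hB.transpose
  rw [ht, Matrix.trace_transpose, hBt, Complex.one_re, mul_one] at h
  have hc : (1 / (d : ℂ)) = ((1 / d : ℝ) : ℂ) := by push_cast; rfl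
  rw [rotatedState_kronecker, hc, Complex.re_mul_ofReal]
  exact mul_le_of_le_one_left (by positivity) h

lemma rotatedState_norm {d : ℕ} (hd : d ≠ 0) {V : Matrix (Fin d) (Fin d) ℂ}
    (hV : V ∈ Matrix.unitaryGroup (Fin d) ℂ) :
    star (rotatedState V) ⬝ᵥ rotatedState V = 1 := by
  have h := rotatedState_kronecker V 1 1
  rw [Matrix.one_kronecker_one, Matrix.one_mulVec, Matrix.mul_one, Matrix.transpose_one,
    Matrix.mul_one, ← Matrix.star_eq_conjTranspose, Matrix.mem_unitaryGroup_iff'.mp hV,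
    Matrix.trace_one, Fintype.card_fin] at h
  rw [h, mul_one_div_cancel (Nat.cast_ne_zero.mpr hd)]

/-- Shannon entropy dominates min-entropy, in natural units. -/
lemma log_le_entropy_of_le {I : Type} [Fintype I] {d : ℝ} {p : I → ℝ}
    (hp : ∀ i, 0 ≤ p i) (hpsum : ∑ i, p i = 1) (hle : ∀ i, p i ≤ 1 / d) :
    Real.log d ≤ ∑ i, -(p i * Real.log (p i)) := by
  rw [← one_mul (Real.log d), ← hpsum, Finset.sum_mul]
  refine Finset.sum_le_sum fun i _ => ?_
  rcases (hp i).eq_or_lt with h | h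
  · simp [← h]
  · have := Real.log_le_log h (hle i)
    rw [one_div, Real.log_inv] at this
    nlinarith

/-- If applying local unitaries `U i` with probabilities `p i` to Alice's half of a
maximally entangled state on `ℂᵈ ⊗ ℂᵈ` yields a separable state, then the Shannon entropy
of the key distribution is at least `log₂ d`. -/
theorem stmt8 (d : ℕ) (hd : 2 ≤ d) (I : Type) [Fintype I]
    (p : I → ℝ) (hp : ∀ i, 0 ≤ p i) (hpsum : ∑ i, p i = 1)
    (U : I → Matrix (Fin d) (Fin d) ℂ)
    (hU : ∀ i, U i ∈ Matrix.unitaryGroup (Fin d) ℂ)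
    (hsep : Separable (∑ i, (p i : ℂ) •
      ((U i ⊗ₖ (1 : Matrix (Fin d) (Fin d) ℂ)) *
        Matrix.vecMulVec (maxEntangledN d) (star (maxEntangledN d)) *
          ((U i)ᴴ ⊗ₖ (1 : Matrix (Fin d) (Fin d) ℂ))))) :
    Real.logb 2 d ≤ ∑ i, (-(p i * Real.log (p i))) / Real.log 2 := by
  obtain ⟨N, q, A, B, hq, hqsum, hA, hAt, hB, hBt, hρ⟩ := hsep
  simp only [conj_vecMulVec_maxEntangledN] at hρ
  have hle : ∀ k, p k ≤ 1 / (d : ℝ) := by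
    intro k
    have h := congrArg
      (fun M => (star (rotatedState (U k)) ⬝ᵥ (M *ᵥ rotatedState (U k))).re) hρ
    simp only [Matrix.sum_mulVec, dotProduct_sum, Matrix.smul_mulVec, dotProduct_smul,
      smul_eq_mul, Complex.re_sum, Complex.re_ofReal_mul] at h
    calc p k = p k * (star (rotatedState (U k)) ⬝ᵥ
          (Matrix.vecMulVec (rotatedState (U k)) (star (rotatedState (U k))) *ᵥ
            rotatedState (U k))).re := by
          rw [Matrix.vecMulVec_mulVec, rotatedState_norm (by omega) (hU k)]
          simp [rotatedState_norm (by omega : d ≠ 0) (hU k)]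
      _ ≤ ∑ i, p i * (star (rotatedState (U k)) ⬝ᵥ
          (Matrix.vecMulVec (rotatedState (U i)) (star (rotatedState (U i))) *ᵥ
            rotatedState (U k))).re := by
          refine Finset.single_le_sum (f := fun i => p i * (star (rotatedState (U k)) ⬝ᵥ
            (Matrix.vecMulVec (rotatedState (U i)) (star (rotatedState (U i))) *ᵥ
              rotatedState (U k))).re) (fun i _ => mul_nonneg (hp i) ?_) (Finset.mem_univ k)
          exact (Complex.le_def.mp ((Matrix.posSemidef_vecMulVec_self_star
            (rotatedState (U i))).dotProduct_mulVec_nonneg (rotatedState (U k)))).1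
      _ = ∑ j, q j * (star (rotatedState (U k)) ⬝ᵥ
          ((A j ⊗ₖ B j) *ᵥ rotatedState (U k))).re := h
      _ ≤ ∑ j, q j * (1 / (d : ℝ)) := Finset.sum_le_sum fun j _ =>
          mul_le_mul_of_nonneg_left
            (re_rotatedState_kronecker_le (hU k) (hA j) (hAt j) (hB j) (hBt j)) (hq j)
      _ = 1 / (d : ℝ) := by rw [← Finset.sum_mul, hqsum, one_mul]
  rw [← Finset.sum_div, Real.logb]
  exact div_le_div_of_nonneg_right (log_le_entropy_of_le hp hpsum hle)
    (Real.log_nonneg one_le_two)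
end

section
/- Let ρ be a separable density matrix on ℂᵈ ⊗ ℂᵈ', indexed by Fin d × Fin d', and let ρ_A be its partial trace over the second factor, defined by (ρ_A)_{i,k} = Σ_j ρ_{(i,j),(k,j)}. Then the von Neumann entropies satisfy S(ρ) ≥ S(ρ_A), where for a positive semidefinite Hermitian matrix σ of trace 1, S(σ) = Σ_i (−λ_i log λ_i)/log 2 with (λ_i) the eigenvalues of σ (and 0 log 0 = 0). -/
/-!
A separable `ρ` satisfies the reduction criterion `ρ ≤ ρ_A ⊗ 1`, since each term obeys
`A_j ⊗ B_j ≤ A_j ⊗ 1` (`posSemidef_reduction`). The entropy inequality follows from this operator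
inequality alone.

Let `ρ` have eigenvalues `λ_m` and unit eigenvectors `e_m`, and let `ρ_A` have eigenvalues `μ_k`
and an orthonormal eigenbasis `a_k`. Put `T_mk = ‖(⟨a_k| ⊗ 1) e_m‖²`. Then `∑_k T_mk = 1`, and the
diagonal entries of `ρ_A` in the basis `a_k` give `∑_m λ_m T_mk = μ_k`. Evaluating
`ρ ≤ ρ_A ⊗ 1` at `(ρ_A ⊗ 1)⁻¹ e_m` gives `λ_m ∑_k T_mk / μ_k ≤ 1`. With `log x ≤ x - 1`,
`S(ρ_A) - S(ρ) = ∑_{m,k} λ_m T_mk log (λ_m / μ_k) ≤ ∑_m λ_m (λ_m ∑_k T_mk / μ_k - 1) ≤ 0`,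
up to the factor `log 2` (`sum_negMulLog_le`). Division by `0` being `0` takes the place of the
pseudo-inverse where `ρ_A` is singular.
-/

open Matrix Kronecker BigOperators
open scoped ComplexOrder

/-- The von Neumann entropy of a Hermitian matrix: the base-2 Shannon entropy of its
eigenvalue sequence (with `0 log 0 = 0`, and conventionally `0` on non-Hermitian input). -/
noncomputable def vonNeumannEntropy {n : Type} [Fintype n] [DecidableEq n]
    (σ : Matrix n n ℂ) : ℝ :=
  if h : σ.IsHermitian then
    ∑ i, (-(h.eigenvalues i * Real.log (h.eigenvalues i))) / Real.log 2
  else 0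

/-- The partial trace over the second factor: `(ρ_A)_{i,k} = ∑ j, ρ_{(i,j),(k,j)}`. -/
noncomputable def partialTraceB {d d' : ℕ} (ρ : Matrix (Fin d × Fin d') (Fin d × Fin d') ℂ) :
    Matrix (Fin d) (Fin d) ℂ :=
  Matrix.of fun i k => ∑ j, ρ (i, j) (k, j)

/-- The entropy comparison in coordinates. The column `V · m` is an eigenvector of the global state
for the eigenvalue `lam m`, written in the product basis whose first factor diagonalizes the reduced
state with eigenvalues `mu`. Hypothesis `h2` says that the reduced state has diagonal `mu`, and `h3`
is the quadratic-form version of `V diag(lam) Vᴴ ≤ diag(mu) ⊗ 1`. -/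
lemma sum_negMulLog_le {α β γ : Type} [Fintype α] [Fintype β] [Fintype γ]
    (V : Matrix (α × β) γ ℂ) (lam : γ → ℝ) (mu : α → ℝ)
    (hlam : ∀ m, 0 ≤ lam m) (hmu : ∀ k, 0 ≤ mu k)
    (h1 : ∀ m, ∑ k, ∑ b, Complex.normSq (V (k, b) m) = 1)
    (h2 : ∀ k, ∑ m, lam m * ∑ b, Complex.normSq (V (k, b) m) = mu k)
    (h3 : ∀ f : α × β → ℂ, ∑ m, lam m * Complex.normSq (∑ p, star (V p m) * f p) ≤
      ∑ p, mu p.1 * Complex.normSq (f p)) :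
    ∑ k, -(mu k * Real.log (mu k)) ≤ ∑ m, -(lam m * Real.log (lam m)) := by
  set T : γ → α → ℝ := fun m k => ∑ b, Complex.normSq (V (k, b) m) with hT
  have hT0 : ∀ m k, 0 ≤ T m k := fun m k => Finset.sum_nonneg fun b _ => Complex.normSq_nonneg _
  have hs0 : ∀ m, 0 ≤ ∑ k, T m k / mu k := fun m =>
    Finset.sum_nonneg fun k _ => div_nonneg (hT0 m k) (hmu k)
  have key : ∀ m, lam m * ∑ k, T m k / mu k ≤ 1 := by
    intro m
    set s := ∑ k, T m k / mu k with hs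
    -- the test vector is `D⁻¹ V_m`, where `D = diag(mu) ⊗ 1`; keeping only the `m`-th term on the
    -- left of `h3` yields `lam m * s ^ 2 ≤ s`
    have h := h3 fun p => V p m / (mu p.1 : ℂ)
    have e1 : ∑ p : α × β, star (V p m) * (V p m / (mu p.1 : ℂ)) = (s : ℂ) := by
      rw [hs, Fintype.sum_prod_type]
      push_cast
      refine Finset.sum_congr rfl fun k _ => ?_
      simp only [hT, Complex.ofReal_sum, Finset.sum_div]
      refine Finset.sum_congr rfl fun b _ => ?_
      rw [Complex.normSq_eq_conj_mul_self, mul_div_assoc]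
      rfl
    have e2 : ∑ p : α × β, mu p.1 * Complex.normSq (V p m / (mu p.1 : ℂ)) = s := by
      rw [hs, Fintype.sum_prod_type]
      refine Finset.sum_congr rfl fun k _ => ?_
      simp only [hT, Finset.sum_div]
      refine Finset.sum_congr rfl fun b _ => ?_
      rw [Complex.normSq_div, Complex.normSq_ofReal]
      rcases eq_or_ne (mu k) 0 with h0 | h0
      · simp [h0]
      · field_simp
    rw [e2] at h
    have h' : lam m * (s * s) ≤ s := by
      refine le_trans ?_ h
      have := Finset.single_le_sum
        (f := fun m' => lam m' * Complex.normSq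
          (∑ p, star (V p m') * (V p m / (mu p.1 : ℂ))))
        (fun m' _ => mul_nonneg (hlam m') (Complex.normSq_nonneg _)) (Finset.mem_univ m)
      simpa only [e1, Complex.normSq_ofReal] using this
    rcases (hs0 m).eq_or_lt with h0 | h0
    · rw [← hs] at h0
      simp [← h0]
    · rw [← hs] at h0
      exact le_of_mul_le_mul_right (by linarith) h0
  have hle : ∀ m k, lam m * T m k ≤ mu k := fun m k => by
    rw [← h2 k]
    exact Finset.single_le_sum (f := fun m => lam m * T m k)
      (fun m _ => mul_nonneg (hlam m) (hT0 m k)) (Finset.mem_univ m)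
  have hterm : ∀ m k, lam m * T m k * (Real.log (lam m) - Real.log (mu k)) ≤
      lam m * (lam m * (T m k / mu k) - T m k) := by
    intro m k
    rcases (hlam m).eq_or_lt with h0 | hl
    · simp [← h0]
    -- if `mu k = 0` then `T m k = 0` by `hle`, so only positive `mu k` remain
    rcases (hT0 m k).eq_or_lt with h0 | ht
    · simp [← h0]
    have hm : 0 < mu k := (mul_pos hl ht).trans_le (hle m k)
    have hlog := Real.log_le_sub_one_of_pos (div_pos hl hm)
    rw [Real.log_div hl.ne' hm.ne'] at hlog
    calc _ ≤ lam m * T m k * (lam m / mu k - 1) :=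
          mul_le_mul_of_nonneg_left hlog (mul_pos hl ht).le
      _ = _ := by ring
  have e3 : ∑ k, mu k * Real.log (mu k) = ∑ m, ∑ k, lam m * T m k * Real.log (mu k) := by
    rw [Finset.sum_comm]
    refine Finset.sum_congr rfl fun k _ => ?_
    rw [← Finset.sum_mul, h2 k]
  have e4 : ∑ m, lam m * Real.log (lam m) = ∑ m, ∑ k, lam m * T m k * Real.log (lam m) := by
    refine Finset.sum_congr rfl fun m _ => ?_
    rw [← Finset.sum_mul, ← Finset.mul_sum, h1 m, mul_one]
  have e5 : ∑ m, ∑ k, lam m * T m k * (Real.log (lam m) - Real.log (mu k)) ≤ 0 := by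
    refine Finset.sum_nonpos fun m _ => (Finset.sum_le_sum fun k _ => hterm m k).trans ?_
    rw [← Finset.mul_sum, Finset.sum_sub_distrib, ← Finset.mul_sum, h1 m]
    exact mul_nonpos_of_nonneg_of_nonpos (hlam m) (by linarith [key m])
  simp only [mul_sub, Finset.sum_sub_distrib] at e5
  rw [Finset.sum_neg_distrib, Finset.sum_neg_distrib, e3, e4]
  linarith

/-- A density matrix is at most the identity: its eigenvalues are nonnegative and sum to `1`. -/
lemma posSemidef_one_sub {n : Type} [Fintype n] [DecidableEq n] {B : Matrix n n ℂ}
    (hB : B.PosSemidef) (htr : B.trace = 1) : (1 - B).PosSemidef := by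
  have hle : ∀ i, hB.1.eigenvalues i ≤ 1 := by
    intro i
    have h : ∑ i, hB.1.eigenvalues i = 1 := by
      have := hB.1.trace_eq_sum_eigenvalues
      rw [htr] at this
      exact Complex.ofReal_injective (by push_cast; exact this.symm)
    rw [← h]
    exact Finset.single_le_sum (fun i _ => hB.eigenvalues_nonneg i) (Finset.mem_univ i)
  have hd : (diagonal fun i => (1 : ℂ) - (hB.1.eigenvalues i : ℂ)).PosSemidef := by
    refine PosSemidef.diagonal fun i => ?_
    have : (0 : ℝ) ≤ 1 - hB.1.eigenvalues i := sub_nonneg.2 (hle i)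
    simpa using (Complex.zero_le_real.2 this)
  have h := hd.mul_mul_conjTranspose_same (hB.1.eigenvectorUnitary : Matrix n n ℂ)
  have hs := hB.1.spectral_theorem
  rw [Unitary.conjStarAlgAut_apply] at hs
  have hU : (hB.1.eigenvectorUnitary : Matrix n n ℂ) *
      star (hB.1.eigenvectorUnitary : Matrix n n ℂ) = 1 := Unitary.coe_mul_star_self _
  convert h using 1
  rw [← diagonal_sub, diagonal_one, mul_sub, sub_mul, mul_one, ← star_eq_conjTranspose, hU]
  conv_lhs => rw [hs]
  rfl

lemma partialTraceB_conj {d d' : ℕ} (ρ : Matrix (Fin d × Fin d') (Fin d × Fin d') ℂ)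
    (P Q : Matrix (Fin d) (Fin d) ℂ) :
    partialTraceB ((P ⊗ₖ (1 : Matrix (Fin d') (Fin d') ℂ)) * ρ * (Q ⊗ₖ 1)) =
      P * partialTraceB ρ * Q := by
  ext i k
  have h : ∀ j, ((P ⊗ₖ 1) * ρ * (Q ⊗ₖ 1) : Matrix (Fin d × Fin d') (Fin d × Fin d') ℂ)
      (i, j) (k, j) =
      ∑ x, ∑ y, P i y * ρ (y, j) (x, j) * Q x k := by
    intro j
    simp [mul_apply, Fintype.sum_prod_type, kronecker_apply, one_apply, Finset.sum_mul]
  simp only [partialTraceB, of_apply, h]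
  simp only [mul_apply, of_apply, Finset.sum_mul, Finset.mul_sum]
  rw [Finset.sum_comm]
  refine Finset.sum_congr rfl fun x _ => ?_
  rw [Finset.sum_comm]

/-- Reduction criterion: a separable state satisfies `ρ ≤ ρ_A ⊗ 1`, because the difference is
`∑ j, q j • A j ⊗ (1 - B j)`. -/
lemma posSemidef_reduction {d d' : ℕ} {ρ : Matrix (Fin d × Fin d') (Fin d × Fin d') ℂ}
    (hsep : Separable ρ) :
    (partialTraceB ρ ⊗ₖ (1 : Matrix (Fin d') (Fin d') ℂ) - ρ).PosSemidef := by
  obtain ⟨N, q, A, B, hq, -, hA, -, hB, hBt, rfl⟩ := hsep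
  have hpt : partialTraceB (∑ j, (q j : ℂ) • (A j ⊗ₖ B j)) = ∑ j, (q j : ℂ) • A j := by
    ext i k
    simp only [partialTraceB, of_apply, Matrix.sum_apply, Matrix.smul_apply, kronecker_apply, smul_eq_mul]
    rw [Finset.sum_comm]
    refine Finset.sum_congr rfl fun j _ => ?_
    have := hBt j
    simp only [trace, diag_apply] at this
    rw [← Finset.mul_sum, ← Finset.mul_sum, this, mul_one]
  have : partialTraceB (∑ j, (q j : ℂ) • (A j ⊗ₖ B j)) ⊗ₖ (1 : Matrix (Fin d') (Fin d') ℂ) -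
      ∑ j, (q j : ℂ) • (A j ⊗ₖ B j) = ∑ j, (q j : ℂ) • (A j ⊗ₖ (1 - B j)) := by
    rw [hpt]
    ext ⟨i, b⟩ ⟨k, c⟩
    simp only [Matrix.sub_apply, Matrix.sum_apply, Matrix.smul_apply, kronecker_apply, smul_eq_mul, Finset.sum_mul,
      ← Finset.sum_sub_distrib]
    refine Finset.sum_congr rfl fun j _ => ?_
    ring
  rw [this]
  refine posSemidef_sum _ fun j _ => ?_
  exact ((hA j).kronecker (posSemidef_one_sub (hB j) (hBt j))).smul
    (Complex.zero_le_real.2 (hq j))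

lemma isHermitian_partialTraceB {d d' : ℕ} {ρ : Matrix (Fin d × Fin d') (Fin d × Fin d') ℂ}
    (h : ρ.IsHermitian) : (partialTraceB ρ).IsHermitian := by
  ext i k
  simp only [partialTraceB, conjTranspose_apply, of_apply, star_sum]
  exact Finset.sum_congr rfl fun j _ => h.apply _ _

lemma posSemidef_partialTraceB {d d' : ℕ} {ρ : Matrix (Fin d × Fin d') (Fin d × Fin d') ℂ}
    (h : ρ.PosSemidef) : (partialTraceB ρ).PosSemidef := by
  have : partialTraceB ρ = ∑ j, ρ.submatrix (fun i => (i, j)) (fun i => (i, j)) := by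
    ext i k
    simp [partialTraceB, Matrix.sum_apply]
  rw [this]
  exact posSemidef_sum _ fun j _ => h.submatrix _

lemma dotProduct_conj_diagonal {m n : Type} [Fintype m] [Fintype n] [DecidableEq n]
    (V : Matrix m n ℂ) (w : n → ℝ) (f : m → ℂ) :
    star f ⬝ᵥ ((V * diagonal (fun i => (w i : ℂ)) * Vᴴ) *ᵥ f) =
      ((∑ i, w i * Complex.normSq (∑ p, star (V p i) * f p) : ℝ) : ℂ) := by
  have hv : ∀ i, (Vᴴ *ᵥ f) i = ∑ p, star (V p i) * f p := fun i => rfl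
  have hv' : star f ᵥ* V = star (Vᴴ *ᵥ f) := by rw [star_mulVec, conjTranspose_conjTranspose]
  rw [← mulVec_mulVec, ← mulVec_mulVec, dotProduct_mulVec, hv']
  simp only [dotProduct, mulVec_diagonal, Pi.star_apply, hv, Complex.ofReal_sum,
    Complex.ofReal_mul, Complex.normSq_eq_conj_mul_self]
  refine Finset.sum_congr rfl fun i _ => ?_
  simp only [starRingEnd_apply]
  ring

/-- For a separable density matrix, the von Neumann entropy of the whole state is at least
that of its reduced state on the first factor. -/
theorem stmt9 (d d' : ℕ) (ρ : Matrix (Fin d × Fin d') (Fin d × Fin d') ℂ)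
    (hρ : ρ.PosSemidef) (htr : ρ.trace = 1) (hsep : Separable ρ) :
    vonNeumannEntropy (partialTraceB ρ) ≤ vonNeumannEntropy ρ := by
  have hA := posSemidef_partialTraceB hρ
  rw [vonNeumannEntropy, dif_pos hA.1, vonNeumannEntropy, dif_pos hρ.1, ← Finset.sum_div,
    ← Finset.sum_div]
  refine div_le_div_of_nonneg_right ?_ (Real.log_nonneg one_le_two)
  set E : Matrix (Fin d × Fin d') (Fin d × Fin d') ℂ := hρ.1.eigenvectorUnitary.1 with hE
  set U : Matrix (Fin d) (Fin d) ℂ := hA.1.eigenvectorUnitary.1 with hU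
  have hUU' : U * Uᴴ = 1 := Unitary.coe_mul_star_self hA.1.eigenvectorUnitary
  have hEE : Eᴴ * E = 1 := Unitary.coe_star_mul_self hρ.1.eigenvectorUnitary
  have hρE : ρ = E * diagonal (fun i => (hρ.1.eigenvalues i : ℂ)) * Eᴴ := by
    have h := hρ.1.spectral_theorem
    rw [Unitary.conjStarAlgAut_apply] at h
    exact h
  have hAU : Uᴴ * partialTraceB ρ * U = diagonal (fun i => (hA.1.eigenvalues i : ℂ)) := by
    have h := hA.1.conjStarAlgAut_star_eigenvectorUnitary
    rw [Unitary.conjStarAlgAut_star_apply] at h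
    exact h
  -- `W` passes to a basis in which the reduced state is diagonal; the eigenvectors of `ρ` in that
  -- basis are the columns of `Wᴴ * E`
  set W : Matrix (Fin d × Fin d') (Fin d × Fin d') ℂ := U ⊗ₖ 1 with hW
  have hWs : Wᴴ = Uᴴ ⊗ₖ 1 := by rw [hW, conjTranspose_kronecker, conjTranspose_one]
  have hWW : W * Wᴴ = 1 := by
    rw [hWs, hW, ← mul_kronecker_mul, hUU', one_mul, one_kronecker_one]
  have hVV : (Wᴴ * E)ᴴ * (Wᴴ * E) = 1 := by
    rw [conjTranspose_mul, conjTranspose_conjTranspose, Matrix.mul_assoc, ← Matrix.mul_assoc W, hWW,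
      Matrix.one_mul, hEE]
  have hρV : Wᴴ * ρ * W = (Wᴴ * E) * diagonal (fun i => (hρ.1.eigenvalues i : ℂ)) *
      (Wᴴ * E)ᴴ := by
    conv_lhs => rw [hρE]
    rw [conjTranspose_mul, conjTranspose_conjTranspose]
    simp only [Matrix.mul_assoc]
  have hDW : Wᴴ * (partialTraceB ρ ⊗ₖ 1) * W =
      1 * diagonal (fun p : Fin d × Fin d' => (hA.1.eigenvalues p.1 : ℂ)) * 1ᴴ := by
    rw [hWs, hW, ← mul_kronecker_mul, ← mul_kronecker_mul, hAU, one_mul, one_mul,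
      ← diagonal_one, diagonal_kronecker_diagonal]
    simp
  refine sum_negMulLog_le (Wᴴ * E) _ _ hρ.eigenvalues_nonneg hA.eigenvalues_nonneg ?_ ?_ ?_
  · intro m
    have h := congrFun (congrFun hVV m) m
    rw [one_apply_eq, mul_apply, Fintype.sum_prod_type] at h
    simp only [conjTranspose_apply, ← starRingEnd_apply, ← Complex.normSq_eq_conj_mul_self] at h
    exact_mod_cast h
  · intro k
    have h := partialTraceB_conj ρ Uᴴ U
    rw [← hWs, ← hW, hAU, hρV] at h
    have h := congrFun (congrFun h k) k
    rw [diagonal_apply_eq] at h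
    simp only [partialTraceB, of_apply] at h
    refine Complex.ofReal_injective (Eq.trans ?_ h)
    push_cast
    simp only [Finset.mul_sum]
    rw [Finset.sum_comm]
    refine Finset.sum_congr rfl fun b _ => ?_
    rw [mul_apply]
    refine Finset.sum_congr rfl fun m _ => ?_
    rw [mul_diagonal, conjTranspose_apply, Complex.normSq_eq_conj_mul_self, starRingEnd_apply]
    ring
  · intro f
    have h := ((posSemidef_reduction hsep).conjTranspose_mul_mul_same W).dotProduct_mulVec_nonneg f
    rw [Matrix.mul_sub, Matrix.sub_mul, hρV, hDW, sub_mulVec, dotProduct_sub,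
      dotProduct_conj_diagonal, dotProduct_conj_diagonal, sub_nonneg, Complex.real_le_real] at h
    refine h.trans_eq ?_
    simp [one_apply]
end
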